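/- arXiv:2010.09779 — 2 statements merged into one kernel-verified Lean document; each statement's English description precedes it below -/
import Mathlib

section
/- Let u, a, b, y be as in the Painlevé II system below, and assume y(x,w) > 0 for all (x,w). For (x,t,r) ∈ ℝ × (0,∞) × ℝ set s = t^(-1/3)·r + t^(-4/3)·x^2 and define φ_br(x,t,r) = −t^(-2/3)·u(s)^2 + ∂_r^2[ log y(s, t^(-2/3)·x/2) ] (the first summand equals ∂_r^2 log F_GUE(s) for the Tracy–Widom GUE distribution, so φ_br = ∂_r^2 log of the scaled anti-derivative of the Baik–Rains distribution). Then φ_br satisfies the (r-differentiated) KP equation: ∂_r( ∂_t φ_br + φ_br·∂_r φ_br + (1/12)·∂_r^3 φ_br ) + (1/4)·∂_x^2 φ_br = 0 at every point of ℝ × (0,∞) × ℝ. -/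
/-- The left-hand side of the (r-differentiated) KP equation
`∂_r(∂_t φ + φ·∂_r φ + (1/12)·∂_r³ φ) + (1/4)·∂_x² φ` for `φ = φ x t r`. -/
noncomputable def kpDiff (φ : ℝ → ℝ → ℝ → ℝ) (x t r : ℝ) : ℝ :=
  deriv (fun r' => deriv (fun t' => φ x t' r') t
      + φ x t r' * deriv (fun s => φ x t s) r'
      + (1/12) * iteratedDeriv 3 (fun s => φ x t s) r') r
    + (1/4) * iteratedDeriv 2 (fun x' => φ x' t r) x

def SmKP (f : ℝ → ℝ → ℝ) : Prop := ContDiff ℝ (⊤ : ℕ∞) (fun q : ℝ × ℝ => f q.1 q.2)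

noncomputable def D1KP (f : ℝ → ℝ → ℝ) : ℝ → ℝ → ℝ := fun s w => deriv (fun s' => f s' w) s

noncomputable def D2KP (f : ℝ → ℝ → ℝ) : ℝ → ℝ → ℝ := fun s w => deriv (fun w' => f s w') w

lemma kp_chain0 {f : ℝ → ℝ → ℝ} (hf : SmKP f) {σ ω : ℝ → ℝ} {σ' ω' τ : ℝ}
    (hσ : HasDerivAt σ σ' τ) (hω : HasDerivAt ω ω' τ) :
    HasDerivAt (fun x => f (σ x) (ω x))
      (fderiv ℝ (fun q : ℝ × ℝ => f q.1 q.2) (σ τ, ω τ) (σ', ω')) τ := by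
  have h1 : DifferentiableAt ℝ (fun q : ℝ × ℝ => f q.1 q.2) (σ τ, ω τ) :=
    (ContDiff.differentiable hf (by simp)).differentiableAt
  exact h1.hasFDerivAt.comp_hasDerivAt τ (hσ.prodMk hω)

lemma kp_D1_eq {f : ℝ → ℝ → ℝ} (hf : SmKP f) (s w : ℝ) :
    D1KP f s w = fderiv ℝ (fun q : ℝ × ℝ => f q.1 q.2) (s, w) (1, 0) :=
  (kp_chain0 hf (hasDerivAt_id s) (hasDerivAt_const s w)).deriv

lemma kp_D2_eq {f : ℝ → ℝ → ℝ} (hf : SmKP f) (s w : ℝ) :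
    D2KP f s w = fderiv ℝ (fun q : ℝ × ℝ => f q.1 q.2) (s, w) (0, 1) :=
  (kp_chain0 hf (hasDerivAt_const w s) (hasDerivAt_id w)).deriv

lemma kp_chain {f : ℝ → ℝ → ℝ} (hf : SmKP f) {σ ω : ℝ → ℝ} {σ' ω' τ : ℝ}
    (hσ : HasDerivAt σ σ' τ) (hω : HasDerivAt ω ω' τ) :
    HasDerivAt (fun x => f (σ x) (ω x))
      (D1KP f (σ τ) (ω τ) * σ' + D2KP f (σ τ) (ω τ) * ω') τ := by
  have h := kp_chain0 hf hσ hω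
  have e : ((σ', ω') : ℝ × ℝ) = σ' • ((1, 0) : ℝ × ℝ) + ω' • ((0, 1) : ℝ × ℝ) := by
    ext <;> simp
  rw [e, map_add, map_smul, map_smul, ← kp_D1_eq hf, ← kp_D2_eq hf] at h
  simpa [mul_comm] using h

lemma kp_h1 {f : ℝ → ℝ → ℝ} (hf : SmKP f) (s w : ℝ) :
    HasDerivAt (fun x => f x w) (D1KP f s w) s := by
  simpa using kp_chain hf (hasDerivAt_id s) (hasDerivAt_const s w)

lemma kp_h2 {f : ℝ → ℝ → ℝ} (hf : SmKP f) (s w : ℝ) :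
    HasDerivAt (fun x => f s x) (D2KP f s w) w := by
  simpa using kp_chain hf (hasDerivAt_const w s) (hasDerivAt_id w)

lemma kp_Sm_D1 {f : ℝ → ℝ → ℝ} (hf : SmKP f) : SmKP (D1KP f) := by
  have h : ContDiff ℝ (⊤ : ℕ∞) (fun q : ℝ × ℝ =>
      fderiv ℝ (fun q : ℝ × ℝ => f q.1 q.2) q (1, 0)) :=
    (ContDiff.fderiv_right hf (m := (⊤ : ℕ∞)) (by simp)).clm_apply contDiff_const
  have e : (fun q : ℝ × ℝ => D1KP f q.1 q.2) = (fun q : ℝ × ℝ =>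
      fderiv ℝ (fun q : ℝ × ℝ => f q.1 q.2) q (1, 0)) := by
    funext q; exact kp_D1_eq hf q.1 q.2
  unfold SmKP; rw [e]; exact h

lemma kp_Sm_D2 {f : ℝ → ℝ → ℝ} (hf : SmKP f) : SmKP (D2KP f) := by
  have h : ContDiff ℝ (⊤ : ℕ∞) (fun q : ℝ × ℝ =>
      fderiv ℝ (fun q : ℝ × ℝ => f q.1 q.2) q (0, 1)) :=
    (ContDiff.fderiv_right hf (m := (⊤ : ℕ∞)) (by simp)).clm_apply contDiff_const
  have e : (fun q : ℝ × ℝ => D2KP f q.1 q.2) = (fun q : ℝ × ℝ =>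
      fderiv ℝ (fun q : ℝ × ℝ => f q.1 q.2) q (0, 1)) := by
    funext q; exact kp_D2_eq hf q.1 q.2
  unfold SmKP; rw [e]; exact h

lemma kp_comm {f : ℝ → ℝ → ℝ} (hf : SmKP f) : D1KP (D2KP f) = D2KP (D1KP f) := by
  funext s w
  rw [kp_D1_eq (kp_Sm_D2 hf), kp_D2_eq (kp_Sm_D1 hf)]
  have e1 : (fun q : ℝ × ℝ => D1KP f q.1 q.2) = (fun q : ℝ × ℝ =>
      fderiv ℝ (fun q : ℝ × ℝ => f q.1 q.2) q (1, 0)) := by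
    funext q; exact kp_D1_eq hf q.1 q.2
  have e2 : (fun q : ℝ × ℝ => D2KP f q.1 q.2) = (fun q : ℝ × ℝ =>
      fderiv ℝ (fun q : ℝ × ℝ => f q.1 q.2) q (0, 1)) := by
    funext q; exact kp_D2_eq hf q.1 q.2
  have hd : DifferentiableAt ℝ (fderiv ℝ (fun q : ℝ × ℝ => f q.1 q.2)) (s, w) :=
    ((ContDiff.fderiv_right hf (m := (⊤ : ℕ∞)) (by simp)).differentiable (by simp)).differentiableAt
  have hs : IsSymmSndFDerivAt ℝ (fun q : ℝ × ℝ => f q.1 q.2) (s, w) :=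
    (ContDiff.contDiffAt hf).isSymmSndFDerivAt (by simp; exact WithTop.coe_le_coe.2 (le_top : (2 : ℕ∞) ≤ ⊤))
  rw [e1, e2, fderiv_clm_apply hd (by fun_prop), fderiv_clm_apply hd (by fun_prop)]
  simpa using hs (1, 0) (0, 1)

lemma kp_rpow {t : ℝ} (ht : 0 < t) (q : ℝ) (n : ℕ) (h : q = -(1:ℝ)/3 * n) :
    t ^ q = (t ^ (-(1:ℝ)/3)) ^ n := by
  rw [h, Real.rpow_mul_natCast ht.le]

lemma kp_of_pde (Φ : ℝ → ℝ → ℝ) (hΦ : SmKP Φ)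
    (hpde : ∀ s w, -(1/2) * D1KP Φ s w - s / 3 * D1KP (D1KP Φ) s w
      + w / 3 * D2KP (D1KP Φ) s w + D1KP Φ s w ^ 2 + Φ s w * D1KP (D1KP Φ) s w
      + (1/12) * D1KP (D1KP (D1KP (D1KP Φ))) s w + (1/16) * D2KP (D2KP Φ) s w = 0)
    (φ : ℝ → ℝ → ℝ → ℝ)
    (hφ : ∀ x t r, 0 < t → φ x t r = t ^ (-(2:ℝ)/3) *
      Φ (t ^ (-(1:ℝ)/3) * r + t ^ (-(4:ℝ)/3) * x ^ 2) (t ^ (-(2:ℝ)/3) * x / 2)) :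
    ∀ x t r : ℝ, 0 < t → kpDiff φ x t r = 0 := by
  intro x t r ht
  have h2 := kp_Sm_D1 hΦ
  have h3 := kp_Sm_D1 h2
  have h4 := kp_Sm_D1 h3
  have h5 := kp_Sm_D2 hΦ
  have hcomm := kp_comm hΦ
  obtain ⟨c, hc⟩ : ∃ c, c = t ^ (-(1:ℝ)/3) := ⟨_, rfl⟩
  have e2 : t ^ (-(2:ℝ)/3) = c ^ 2 := by
    rw [hc]; exact kp_rpow ht _ 2 (by norm_num)
  have e4 : t ^ (-(4:ℝ)/3) = c ^ 4 := by
    rw [hc]; exact kp_rpow ht _ 4 (by norm_num)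
  have d1 : HasDerivAt (fun t : ℝ => t ^ (-(1:ℝ)/3)) (-(1/3) * c ^ 4) t := by
    convert Real.hasDerivAt_rpow_const (p := -(1:ℝ)/3) (Or.inl ht.ne') using 1
    rw [kp_rpow ht (-(1:ℝ)/3 - 1) 4 (by norm_num), ← hc]; ring
  have d2 : HasDerivAt (fun t : ℝ => t ^ (-(2:ℝ)/3)) (-(2/3) * c ^ 5) t := by
    convert Real.hasDerivAt_rpow_const (p := -(2:ℝ)/3) (Or.inl ht.ne') using 1
    rw [kp_rpow ht (-(2:ℝ)/3 - 1) 5 (by norm_num), ← hc]; ring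
  have d4 : HasDerivAt (fun t : ℝ => t ^ (-(4:ℝ)/3)) (-(4/3) * c ^ 7) t := by
    convert Real.hasDerivAt_rpow_const (p := -(4:ℝ)/3) (Or.inl ht.ne') using 1
    rw [kp_rpow ht (-(4:ℝ)/3 - 1) 7 (by norm_num), ← hc]; ring
  have hφt : ∀ x r, φ x t r = c ^ 2 * Φ (c * r + c ^ 4 * x ^ 2) (c ^ 2 * x / 2) := by
    intro x r; rw [hφ x t r ht, e2, e4, ← hc]
  -- derivative in r
  have dr : ∀ f, SmKP f → ∀ x r : ℝ, HasDerivAt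
      (fun r => f (c * r + c ^ 4 * x ^ 2) (c ^ 2 * x / 2))
      (c * D1KP f (c * r + c ^ 4 * x ^ 2) (c ^ 2 * x / 2)) r := by
    intro f hf x r
    have := kp_chain hf (σ := fun r => c * r + c ^ 4 * x ^ 2) (ω := fun _ => c ^ 2 * x / 2)
      (((hasDerivAt_id r).const_mul c).add_const _) (hasDerivAt_const r _)
    convert this using 1
    ring
  have dx : ∀ f, SmKP f → ∀ x r : ℝ, HasDerivAt
      (fun x => f (c * r + c ^ 4 * x ^ 2) (c ^ 2 * x / 2))
      (2 * c ^ 4 * x * D1KP f (c * r + c ^ 4 * x ^ 2) (c ^ 2 * x / 2)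
        + c ^ 2 / 2 * D2KP f (c * r + c ^ 4 * x ^ 2) (c ^ 2 * x / 2)) x := by
    intro f hf x r
    have := kp_chain hf (σ := fun x => c * r + c ^ 4 * x ^ 2) (ω := fun x => c ^ 2 * x / 2)
      ((((hasDerivAt_id x).pow 2).const_mul (c ^ 4)).const_add (c * r))
      (((hasDerivAt_id x).const_mul (c ^ 2)).div_const 2)
    convert this using 1
    simp
    ring
  have dt : ∀ r, deriv (fun t' => φ x t' r) t =
      -(2/3) * c ^ 5 * Φ (c * r + c ^ 4 * x ^ 2) (c ^ 2 * x / 2)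
      + c ^ 2 * (D1KP Φ (c * r + c ^ 4 * x ^ 2) (c ^ 2 * x / 2)
          * (-(1/3) * c ^ 4 * r - (4/3) * c ^ 7 * x ^ 2)
        + D2KP Φ (c * r + c ^ 4 * x ^ 2) (c ^ 2 * x / 2) * (-(1/3) * c ^ 5 * x)) := by
    intro r
    have hev : (fun t' => φ x t' r) =ᶠ[nhds t] (fun t' => t' ^ (-(2:ℝ)/3) *
      Φ (t' ^ (-(1:ℝ)/3) * r + t' ^ (-(4:ℝ)/3) * x ^ 2) (t' ^ (-(2:ℝ)/3) * x / 2)) := by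
      filter_upwards [lt_mem_nhds ht] with t' ht'
      exact hφ x t' r ht'
    rw [hev.deriv_eq]
    have := d2.mul (kp_chain hΦ
      (σ := fun t' => t' ^ (-(1:ℝ)/3) * r + t' ^ (-(4:ℝ)/3) * x ^ 2)
      (ω := fun t' => t' ^ (-(2:ℝ)/3) * x / 2)
      ((d1.mul_const r).add (d4.mul_const (x ^ 2))) ((d2.mul_const x).div_const 2))
    have h := this.deriv
    simp only [e2, e4, ← hc] at h
    refine Eq.trans h ?_
    ring
  have r1 : ∀ r, deriv (fun s => φ x t s) r =
      c ^ 3 * D1KP Φ (c * r + c ^ 4 * x ^ 2) (c ^ 2 * x / 2) := by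
    intro r
    simp only [hφt]
    rw [((dr Φ hΦ x r).const_mul (c ^ 2)).deriv]; ring
  have r2 : ∀ r, deriv (deriv (fun s => φ x t s)) r =
      c ^ 4 * D1KP (D1KP Φ) (c * r + c ^ 4 * x ^ 2) (c ^ 2 * x / 2) := by
    intro r
    rw [funext r1, ((dr _ h2 x r).const_mul (c ^ 3)).deriv]; ring
  have r3 : ∀ r, iteratedDeriv 3 (fun s => φ x t s) r =
      c ^ 5 * D1KP (D1KP (D1KP Φ)) (c * r + c ^ 4 * x ^ 2) (c ^ 2 * x / 2) := by
    intro r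
    rw [iteratedDeriv_succ, iteratedDeriv_succ, iteratedDeriv_one, funext r2,
      ((dr _ h3 x r).const_mul (c ^ 4)).deriv]; ring
  have x1 : ∀ y, deriv (fun x' => φ x' t r) y = c ^ 2 *
      (2 * c ^ 4 * y * D1KP Φ (c * r + c ^ 4 * y ^ 2) (c ^ 2 * y / 2)
        + c ^ 2 / 2 * D2KP Φ (c * r + c ^ 4 * y ^ 2) (c ^ 2 * y / 2)) := by
    intro y
    simp only [hφt]
    rw [((dx Φ hΦ y r).const_mul (c ^ 2)).deriv]
  have x2 : iteratedDeriv 2 (fun x' => φ x' t r) x = deriv (fun y => c ^ 2 *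
      (2 * c ^ 4 * y * D1KP Φ (c * r + c ^ 4 * y ^ 2) (c ^ 2 * y / 2)
        + c ^ 2 / 2 * D2KP Φ (c * r + c ^ 4 * y ^ 2) (c ^ 2 * y / 2))) x := by
    rw [iteratedDeriv_succ, iteratedDeriv_one, funext x1]
  have hx := (((((hasDerivAt_id x).const_mul (2 * c ^ 4)).mul (dx _ h2 x r)).add
      ((dx _ h5 x r).const_mul (c ^ 2 / 2))).const_mul (c ^ 2)).deriv
  have hr := (((((dr Φ hΦ x r).const_mul (-(2/3) * c ^ 5)).add
      ((((dr _ h2 x r).mul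
        (((hasDerivAt_id r).const_mul (-(1/3) * c ^ 4)).sub_const ((4/3) * c ^ 7 * x ^ 2))).add
        ((dr _ h5 x r).mul_const (-(1/3) * c ^ 5 * x))).const_mul (c ^ 2))).add
      (((dr Φ hΦ x r).const_mul (c ^ 2)).mul ((dr _ h2 x r).const_mul (c ^ 3)))).add
      (((dr _ h4 x r).const_mul (c ^ 5)).const_mul (1/12))).deriv
  unfold kpDiff
  rw [x2]
  simp only [dt, r1, r3]
  simp only [hφt]
  refine (congrArg₂ (fun A B : ℝ => A + 1 / 4 * B) hr hx).trans ?_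
  simp only [hcomm, id]
  linear_combination c ^ 6 * hpde (c * r + c ^ 4 * x ^ 2) (c ^ 2 * x / 2)
lemma kp_pde (u p : ℝ → ℝ) (α β ρ : ℝ → ℝ → ℝ)
    (hu : ContDiff ℝ (⊤ : ℕ∞) u) (hp : ContDiff ℝ (⊤ : ℕ∞) p)
    (hα : SmKP α) (hβ : SmKP β) (hρ : SmKP ρ)
    (us : ∀ s, HasDerivAt u (p s) s)
    (ps : ∀ s, HasDerivAt p (2 * u s ^ 3 + s * u s) s)
    (αs : ∀ s w, HasDerivAt (fun s => α s w)
      (2 * u s * ρ s w + 2 * w * α s w + α s w * ρ s w) s)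
    (βs : ∀ s w, HasDerivAt (fun s => β s w)
      (2 * u s * ρ s w - 2 * w * β s w + β s w * ρ s w) s)
    (ρs : ∀ s w, HasDerivAt (fun s => ρ s w) (u s * (α s w + β s w) + ρ s w ^ 2) s)
    (αw : ∀ s w, HasDerivAt (fun w => α s w)
      (-4 * (p s + 2 * w * u s) * ρ s w + 2 * (2 * u s ^ 2 + s - 4 * w ^ 2) * α s w
        - (8 * w * ρ s w + 2 * u s * (β s w - α s w)) * α s w) w)
    (βw : ∀ s w, HasDerivAt (fun w => β s w)
      (4 * (p s - 2 * w * u s) * ρ s w - 2 * (2 * u s ^ 2 + s - 4 * w ^ 2) * β s w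
        - (8 * w * ρ s w + 2 * u s * (β s w - α s w)) * β s w) w)
    (ρw : ∀ s w, HasDerivAt (fun w => ρ s w)
      (-2 * (p s + 2 * w * u s) * β s w + 2 * (p s - 2 * w * u s) * α s w
        - (8 * w * ρ s w + 2 * u s * (β s w - α s w)) * ρ s w) w)
    (rel1 : ∀ s w, ρ s w ^ 2 = α s w * β s w)
    (rel2 : ∀ s w, -(2 * u s ^ 2 + s - 4 * w ^ 2) * ρ s w + (p s + 2 * w * u s) * β s w
      + (p s - 2 * w * u s) * α s w = 1)
    (Φ : ℝ → ℝ → ℝ)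
    (hΦ : Φ = fun s w => -u s ^ 2 - u s * (α s w + β s w) - ρ s w ^ 2) :
    SmKP Φ ∧ ∀ s w, -(1/2) * D1KP Φ s w - s / 3 * D1KP (D1KP Φ) s w
      + w / 3 * D2KP (D1KP Φ) s w + D1KP Φ s w ^ 2 + Φ s w * D1KP (D1KP Φ) s w
      + (1/12) * D1KP (D1KP (D1KP (D1KP Φ))) s w + (1/16) * D2KP (D2KP Φ) s w = 0 := by
  have hu' : ContDiff ℝ (⊤ : ℕ∞) (fun q : ℝ × ℝ => u q.1) := hu.comp contDiff_fst
  have hp' : ContDiff ℝ (⊤ : ℕ∞) (fun q : ℝ × ℝ => p q.1) := hp.comp contDiff_fst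
  obtain ⟨m, hm⟩ : ∃ m : ℝ → ℝ → ℝ,
    m = fun s w => p s ^ 2 - u s ^ 4 - s * u s ^ 2 - ρ s w := ⟨_, rfl⟩
  obtain ⟨η, hη⟩ : ∃ η : ℝ → ℝ → ℝ,
    η = fun s w => 8 * w * ρ s w + 2 * u s * (β s w - α s w) := ⟨_, rfl⟩
  have SΦ : SmKP Φ := by
    rw [hΦ]; unfold SmKP at *; fun_prop
  have Sm : SmKP m := by
    rw [hm]; unfold SmKP at *; fun_prop
  have Sη : SmKP η := by
    rw [hη]; unfold SmKP at *; fun_prop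
  refine ⟨SΦ, ?_⟩
  have m1 : D1KP m = Φ := by
    funext s w
    have h := (((((ps s).pow 2).sub ((us s).pow 4)).sub
      ((hasDerivAt_id s).mul ((us s).pow 2))).sub (ρs s w)).deriv
    rw [hm, hΦ]
    refine Eq.trans h ?_
    simp; ring
  have m2 : ∀ s w, D2KP m s w = 2 * (p s + 2 * w * u s) * β s w
      - 2 * (p s - 2 * w * u s) * α s w
        + (8 * w * ρ s w + 2 * u s * (β s w - α s w)) * ρ s w := by
    intro s w
    have h := ((ρw s w).const_sub (p s ^ 2 - u s ^ 4 - s * u s ^ 2)).deriv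
    rw [hm]
    refine Eq.trans h ?_
    ring
  have η1 : D1KP η = D2KP m := by
    funext s w
    rw [m2]
    have h := (((ρs s w).const_mul (8 * w)).add
      (((us s).const_mul 2).mul ((βs s w).sub (αs s w)))).deriv
    rw [hη]
    refine Eq.trans h ?_
    simp; ring
  have η2 : ∀ s w, D2KP η s w = 8 * ρ s w - 8 * w * D2KP m s w
      + 2 * u s * ((4 * (p s - 2 * w * u s) * ρ s w - 2 * (2 * u s ^ 2 + s - 4 * w ^ 2) * β s w
        - (8 * w * ρ s w + 2 * u s * (β s w - α s w)) * β s w) -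
        (-4 * (p s + 2 * w * u s) * ρ s w + 2 * (2 * u s ^ 2 + s - 4 * w ^ 2) * α s w
        - (8 * w * ρ s w + 2 * u s * (β s w - α s w)) * α s w)) := by
    intro s w
    rw [m2]
    have h := ((((hasDerivAt_id w).const_mul 8).mul (ρw s w)).add
      (((βw s w).sub (αw s w)).const_mul (2 * u s))).deriv
    rw [hη]
    refine Eq.trans h ?_
    simp; ring
  have Φ1 : D1KP Φ = fun s w => (-2 * w^1) * u s * α s w + (2 * w^1) * u s * β s w + (-4) * u s ^ 2 * ρ s w + (-2) * u s * p s + (-3) * u s * α s w * ρ s w + (-3) * u s * β s w * ρ s w + (-1) * p s * α s w + (-1) * p s * β s w + (-2) * ρ s w ^ 3 := by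
    funext s w
    have h := ((((us s).pow 2).neg.sub ((us s).mul ((αs s w).add (βs s w)))).sub
      ((ρs s w).pow 2)).deriv
    rw [hΦ]
    refine Eq.trans h ?_
    simp; ring
  have Φ2 : ∀ s w, D1KP (D1KP Φ) s w = (-2)*s*u s^2 + (-1)*s*u s*α s w + (-1)*s*u s*β s w + (-4)*w^2*u s*α s w + (-4)*w^2*u s*β s w + (-8)*w*u s*α s w*ρ s w + (8)*w*u s*β s w*ρ s w + (-4)*w*p s*α s w + (4)*w*p s*β s w + (-4)*u s^4 + (-6)*u s^3*α s w + (-6)*u s^3*β s w + (-3)*u s^2*α s w^2 + (-6)*u s^2*α s w*β s w + (-3)*u s^2*β s w^2 + (-16)*u s^2*ρ s w^2 + (-12)*u s*p s*ρ s w + (-12)*u s*α s w*ρ s w^2 + (-12)*u s*β s w*ρ s w^2 + (-2)*p s^2 + (-4)*p s*α s w*ρ s w + (-4)*p s*β s w*ρ s w + (-6)*ρ s w^4 := by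
    intro s w
    rw [Φ1]
    have h := (((((((((((us s).const_mul (-2 * w^1)).mul (αs s w)).add (((us s).const_mul (2 * w^1)).mul (βs s w))).add ((((us s).pow 2).const_mul (-4)).mul (ρs s w))).add (((us s).const_mul (-2)).mul (ps s))).add ((((us s).const_mul (-3)).mul (αs s w)).mul (ρs s w))).add ((((us s).const_mul (-3)).mul (βs s w)).mul (ρs s w))).add (((ps s).const_mul (-1)).mul (αs s w))).add (((ps s).const_mul (-1)).mul (βs s w))).add (((ρs s w).pow 3).const_mul (-2)))
    refine Eq.trans h.deriv ?_
    simp; ring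
  have K : D1KP (D1KP Φ) = fun s w => 12 * (s / 3 * Φ s w - 1 / 6 * m s w
      - w / 3 * D2KP m s w - 1 / 2 * Φ s w ^ 2 - 1 / 16 * D2KP η s w) := by
    funext s w
    rw [Φ2, η2, m2, hΦ, hm]
    simp only
    linear_combination (-4 * ρ s w) * rel2 s w - 12 * u s ^ 2 * rel1 s w
  have c1 : D1KP (D2KP m) = D2KP Φ := by rw [kp_comm Sm, m1]
  have c2 : D1KP (D2KP η) = D2KP (D2KP m) := by rw [kp_comm Sη, η1]
  have c3 : D1KP (D2KP (D2KP m)) = D2KP (D2KP Φ) := by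
    rw [kp_comm (kp_Sm_D2 Sm), c1]
  have SD := kp_Sm_D2 Sm
  have K1 : D1KP (D1KP (D1KP Φ)) = fun s w => 12 * (1 / 6 * Φ s w + s / 3 * D1KP Φ s w
      - w / 3 * D2KP Φ s w - Φ s w * D1KP Φ s w - 1 / 16 * D2KP (D2KP m) s w) := by
    funext s w
    have h := (((((((hasDerivAt_id s).div_const 3).mul (kp_h1 SΦ s w)).sub
      ((kp_h1 Sm s w).const_mul (1/6))).sub ((kp_h1 SD s w).const_mul (w/3))).sub
      (((kp_h1 SΦ s w).pow 2).const_mul (1/2))).sub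
      ((kp_h1 (kp_Sm_D2 Sη) s w).const_mul (1/16))).const_mul 12
    rw [c1, c2, m1] at h
    rw [K]
    refine Eq.trans h.deriv ?_
    simp; ring
  have c4 : D1KP (D2KP Φ) = D2KP (D1KP Φ) := kp_comm SΦ
  intro s w
  have h := (((((kp_h1 SΦ s w).const_mul (1/6)).add
      (((hasDerivAt_id s).div_const 3).mul (kp_h1 (kp_Sm_D1 SΦ) s w))).sub
      ((kp_h1 (kp_Sm_D2 SΦ) s w).const_mul (w/3))).sub
      ((kp_h1 SΦ s w).mul (kp_h1 (kp_Sm_D1 SΦ) s w))).sub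
      ((kp_h1 (kp_Sm_D2 SD) s w).const_mul (1/16)) |>.const_mul 12
  rw [c3, c4] at h
  have e : D1KP (D1KP (D1KP (D1KP Φ))) s w = 12 *
      (1 / 6 * D1KP Φ s w + (1 / 3 * D1KP Φ s w + s / 3 * D1KP (D1KP Φ) s w)
        - w / 3 * D2KP (D1KP Φ) s w
        - (D1KP Φ s w * D1KP Φ s w + Φ s w * D1KP (D1KP Φ) s w)
        - 1 / 16 * D2KP (D2KP Φ) s w) := by
    rw [K1]; exact h.deriv
  rw [e]
  ring

/-- the second logarithmic r-derivative φ_br of the scaled anti-derivative of the Baik–Rains distribution, φ_br(x,t,r) = −t^{-2/3}·u(s)² + ∂_r²[log y(s, t^{-2/3}x/2)] with s = t^{-1/3}r + t^{-4/3}x², satisfies the (r-differentiated) KP equation on ℝ × (0,∞) × ℝ. -/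
theorem baikRains_solves_KP
    (u : ℝ → ℝ) (a b y : ℝ → ℝ → ℝ)
    (hu : ContDiff ℝ (⊤ : ℕ∞) u)
    (hP2 : ∀ x : ℝ, deriv (deriv u) x = 2 * u x ^ 3 + x * u x)
    (ha : ContDiff ℝ (⊤ : ℕ∞) (fun p : ℝ × ℝ => a p.1 p.2))
    (hb : ContDiff ℝ (⊤ : ℕ∞) (fun p : ℝ × ℝ => b p.1 p.2))
    (hax : ∀ x w : ℝ, deriv (fun x' => a x' w) x = u x * b x w)
    (hbx : ∀ x w : ℝ, deriv (fun x' => b x' w) x = u x * a x w - 2 * w * b x w)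
    (haw : ∀ x w : ℝ, deriv (fun w' => a x w') w
      = 2 * u x ^ 2 * a x w - (4 * w * u x + 2 * deriv u x) * b x w)
    (hbw : ∀ x w : ℝ, deriv (fun w' => b x w') w
      = (-(4 * w * u x) + 2 * deriv u x) * a x w
        + (8 * w ^ 2 - 2 * x - 2 * u x ^ 2) * b x w)
    (hab : ∀ x w : ℝ, a x w = -b x (-w) * Real.exp (8 * w ^ 3 / 3 - 2 * w * x))
    (hba : ∀ x w : ℝ, b x w = -a x (-w) * Real.exp (8 * w ^ 3 / 3 - 2 * w * x))
    (hy : ∀ x w : ℝ, y x w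
      = (2 * u x ^ 2 + x - 4 * w ^ 2) * a x w * a x (-w)
        - (deriv u x + 2 * w * u x) * b x w * a x (-w)
        - (deriv u x - 2 * w * u x) * a x w * b x (-w))
    (hypos : ∀ x w : ℝ, 0 < y x w) :
    ∀ x t r : ℝ, 0 < t →
      kpDiff (fun x t r =>
        -(t ^ (-(2:ℝ)/3)) * u (t ^ (-(1:ℝ)/3) * r + t ^ (-(4:ℝ)/3) * x ^ 2) ^ 2
          + iteratedDeriv 2 (fun r' =>
              Real.log (y (t ^ (-(1:ℝ)/3) * r' + t ^ (-(4:ℝ)/3) * x ^ 2)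
                (t ^ (-(2:ℝ)/3) * x / 2))) r) x t r = 0 := by
  have hpS : ContDiff ℝ (⊤ : ℕ∞) (deriv u) := by
    have : ContDiff ℝ ((⊤ : ℕ∞) + 1) u := by simpa using hu
    exact ((contDiff_succ_iff_deriv.1 this).2).2
  have us : ∀ s, HasDerivAt u (deriv u s) s := fun s =>
    (hu.differentiable (by simp)).differentiableAt.hasDerivAt
  have ps : ∀ s, HasDerivAt (deriv u) (2 * u s ^ 3 + s * u s) s := fun s => by
    rw [← hP2]; exact (hpS.differentiable (by simp)).differentiableAt.hasDerivAt
  obtain ⟨p, hp⟩ : ∃ p, p = deriv u := ⟨_, rfl⟩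
  rw [← hp] at hpS us ps
  simp only [← hp] at haw hbw hy
  have Sa : SmKP a := ha
  have Sb : SmKP b := hb
  have Sc : SmKP (fun s w => a s (-w)) :=
    ha.comp (contDiff_fst.prodMk contDiff_snd.neg)
  have Sd : SmKP (fun s w => b s (-w)) :=
    hb.comp (contDiff_fst.prodMk contDiff_snd.neg)
  have as : ∀ s w, HasDerivAt (fun s => a s w) (u s * b s w) s := fun s w => by
    have h := kp_h1 Sa s w
    rwa [D1KP, hax] at h
  have bs : ∀ s w, HasDerivAt (fun s => b s w) (u s * a s w - 2 * w * b s w) s := fun s w => by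
    have h := kp_h1 Sb s w
    rwa [D1KP, hbx] at h
  have aw : ∀ s w, HasDerivAt (fun w => a s w)
      (2 * u s ^ 2 * a s w - (4 * w * u s + 2 * p s) * b s w) w := fun s w => by
    have h := kp_h2 Sa s w
    rwa [D2KP, haw] at h
  have bw : ∀ s w, HasDerivAt (fun w => b s w)
      ((-(4 * w * u s) + 2 * p s) * a s w
        + (8 * w ^ 2 - 2 * s - 2 * u s ^ 2) * b s w) w := fun s w => by
    have h := kp_h2 Sb s w
    rwa [D2KP, hbw] at h
  have cw : ∀ s w, HasDerivAt (fun w => a s (-w))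
      (-(2 * u s ^ 2 * a s (-w) - (4 * (-w) * u s + 2 * p s) * b s (-w))) w := fun s w => by
    have h := (aw s (-w)).comp w (hasDerivAt_neg w)
    rw [mul_neg_one] at h
    exact h
  have dw : ∀ s w, HasDerivAt (fun w => b s (-w))
      (-((-(4 * (-w) * u s) + 2 * p s) * a s (-w)
        + (8 * (-w) ^ 2 - 2 * s - 2 * u s ^ 2) * b s (-w))) w := fun s w => by
    have h := (bw s (-w)).comp w (hasDerivAt_neg w)
    rw [mul_neg_one] at h
    exact h
  have key : ∀ s w, a s w * a s (-w) = b s w * b s (-w) := fun s w => by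
    rw [hab s w, hba s w]; ring
  have ys : ∀ s w, HasDerivAt (fun s => y s w) (a s w * a s (-w)) s := fun s w => by
    have e : (fun s => y s w) = fun s => (2 * u s ^ 2 + s - 4 * w ^ 2) * a s w * a s (-w)
        - (p s + 2 * w * u s) * b s w * a s (-w)
        - (p s - 2 * w * u s) * a s w * b s (-w) := funext fun s => hy s w
    rw [e]
    have h := (((((((us s).pow 2).const_mul 2).add (hasDerivAt_id s)).sub_const (4 * w ^ 2)).mul
      (as s w)).mul (as s (-w))).sub
      ((((ps s).add ((us s).const_mul (2 * w))).mul (bs s w)).mul (as s (-w))) |>.sub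
      ((((ps s).sub ((us s).const_mul (2 * w))).mul (as s w)).mul (bs s (-w)))
    refine HasDerivAt.congr_deriv h ?_
    simp
    linear_combination (2 * u s * p s) * key s w
  have yw : ∀ s w, HasDerivAt (fun w => y s w)
      (-8 * w * (a s w * a s (-w)) + 2 * u s * (a s w * b s (-w) - b s w * a s (-w))) w :=
      fun s w => by
    have e : (fun w => y s w) = fun w => (2 * u s ^ 2 + s - 4 * w ^ 2) * a s w * a s (-w)
        - (p s + 2 * w * u s) * b s w * a s (-w)
        - (p s - 2 * w * u s) * a s w * b s (-w) := funext fun w => hy s w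
    rw [e]
    have h := ((((((hasDerivAt_id w).pow 2).const_mul 4).const_sub (2 * u s ^ 2 + s)).mul
      (aw s w)).mul (cw s w)).sub
      ((((((hasDerivAt_id w).const_mul 2).mul_const (u s)).const_add (p s)).mul (bw s w)).mul
        (cw s w)) |>.sub
      ((((((hasDerivAt_id w).const_mul 2).mul_const (u s)).const_sub (p s)).mul (aw s w)).mul
        (dw s w))
    refine HasDerivAt.congr_deriv h ?_
    simp
    ring
  have Sy : SmKP y := by
    have e : (fun q : ℝ × ℝ => y q.1 q.2) = fun q : ℝ × ℝ =>
        (2 * u q.1 ^ 2 + q.1 - 4 * q.2 ^ 2) * a q.1 q.2 * a q.1 (-q.2)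
        - (p q.1 + 2 * q.2 * u q.1) * b q.1 q.2 * a q.1 (-q.2)
        - (p q.1 - 2 * q.2 * u q.1) * a q.1 q.2 * b q.1 (-q.2) := funext fun q => hy q.1 q.2
    have hu' : ContDiff ℝ (⊤ : ℕ∞) (fun q : ℝ × ℝ => u q.1) := hu.comp contDiff_fst
    have hp' : ContDiff ℝ (⊤ : ℕ∞) (fun q : ℝ × ℝ => p q.1) := hpS.comp contDiff_fst
    unfold SmKP at *
    rw [e]
    fun_prop
  have yne : ∀ s w, y s w ≠ 0 := fun s w => (hypos s w).ne'
  have Sα : SmKP (fun s w => -(a s w * b s (-w)) / y s w) := by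
    unfold SmKP at *
    exact ContDiff.div (by fun_prop) Sy (fun q => yne q.1 q.2)
  have Sβ : SmKP (fun s w => -(b s w * a s (-w)) / y s w) := by
    unfold SmKP at *
    exact ContDiff.div (by fun_prop) Sy (fun q => yne q.1 q.2)
  have Sρ : SmKP (fun s w => -(a s w * a s (-w)) / y s w) := by
    unfold SmKP at *
    exact ContDiff.div (by fun_prop) Sy (fun q => yne q.1 q.2)
  obtain ⟨Φ, hΦ⟩ : ∃ Φ : ℝ → ℝ → ℝ, Φ = fun s w => -u s ^ 2
    - u s * (-(a s w * b s (-w)) / y s w + -(b s w * a s (-w)) / y s w)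
    - (-(a s w * a s (-w)) / y s w) ^ 2 := ⟨_, rfl⟩
  have ρs : ∀ s w, HasDerivAt (fun s => -(a s w * a s (-w)) / y s w)
      (u s * (-(a s w * b s (-w)) / y s w + -(b s w * a s (-w)) / y s w)
        + (-(a s w * a s (-w)) / y s w) ^ 2) s := fun s w => by
    refine HasDerivAt.congr_deriv
      (((as s w).mul (as s (-w))).neg.div (ys s w) (yne s w)) ?_
    have := yne s w
    simp
    field_simp
  have main := kp_pde u p (fun s w => -(a s w * b s (-w)) / y s w)
    (fun s w => -(b s w * a s (-w)) / y s w) (fun s w => -(a s w * a s (-w)) / y s w)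
    hu hpS Sα Sβ Sρ us ps ?_ ?_ ρs ?_ ?_ ?_ ?_ ?_ Φ hΦ
  · refine kp_of_pde Φ main.1 main.2 _ ?_
    intro x t r ht
    obtain ⟨c, hc⟩ : ∃ c, c = t ^ (-(1:ℝ)/3) := ⟨_, rfl⟩
    have e2 : t ^ (-(2:ℝ)/3) = c ^ 2 := by
      rw [hc]; exact kp_rpow ht _ 2 (by norm_num)
    rw [e2, ← hc]
    generalize t ^ (-(4:ℝ)/3) * x ^ 2 = d
    generalize c ^ 2 * x / 2 = w
    have hl : ∀ r, HasDerivAt (fun r => c * r + d) c r := fun r => by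
      simpa using ((hasDerivAt_id r).const_mul c).add_const d
    have l1 : deriv (fun r' => Real.log (y (c * r' + d) w)) =
        fun r => -c * (-(a (c * r + d) w * a (c * r + d) (-w)) / y (c * r + d) w) := by
      funext r
      have h1 := (HasDerivAt.comp (h₂ := fun s => y s w) (h := fun r => c * r + d) r (ys (c * r + d) w) (hl r)).log (yne _ _)
      refine h1.deriv.trans ?_
      simp only [Function.comp]
      ring
    have l2 := ((HasDerivAt.comp r (ρs (c * r + d) w) (hl r)).const_mul (-c)).deriv
    rw [iteratedDeriv_succ, iteratedDeriv_one, l1, hΦ]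
    refine (congrArg (fun z => -c ^ 2 * u (c * r + d) ^ 2 + z) l2).trans ?_
    ring
  · intro s w
    refine HasDerivAt.congr_deriv
      (((as s w).mul (bs s (-w))).neg.div (ys s w) (yne s w)) ?_
    have := yne s w
    simp
    field_simp
    linear_combination (u s * y s w) * key s w
  · intro s w
    refine HasDerivAt.congr_deriv
      (((bs s w).mul (as s (-w))).neg.div (ys s w) (yne s w)) ?_
    have := yne s w
    simp
    field_simp
    linear_combination (u s * y s w) * key s w
  · intro s w
    refine HasDerivAt.congr_deriv
      (((aw s w).mul (dw s w)).neg.div (yw s w) (yne s w)) ?_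
    have := yne s w
    simp
    field_simp
    linear_combination (-(4 * w * u s + 2 * p s) * y s w) * key s w
  · intro s w
    refine HasDerivAt.congr_deriv
      (((bw s w).mul (cw s w)).neg.div (yw s w) (yne s w)) ?_
    have := yne s w
    simp
    field_simp
    linear_combination ((2 * p s - 4 * w * u s) * y s w) * key s w
  · intro s w
    refine HasDerivAt.congr_deriv
      (((aw s w).mul (cw s w)).neg.div (yw s w) (yne s w)) ?_
    have := yne s w
    simp
    field_simp
    ring
  · intro s w
    have := yne s w
    field_simp
    linear_combination (a s w * a s (-w)) * key s w
  · intro s w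
    have := yne s w
    field_simp
    linear_combination -hy s w
end

section
/- Let u, a, b, y be as in the Painlevé II system below. Then for all (x,w) ∈ ℝ × ℝ: ∂_x^2 y(x,w) = u(x)·b(x,w)·a(x,−w) + u(x)·a(x,w)·b(x,−w). -/
/-- second x-derivative of y in the Painlevé II system. -/
theorem painleveII_y_deriv_x_two
    (u : ℝ → ℝ) (a b y : ℝ → ℝ → ℝ)
    (hu : ContDiff ℝ (⊤ : ℕ∞) u)
    (hP2 : ∀ x : ℝ, deriv (deriv u) x = 2 * u x ^ 3 + x * u x)
    (ha : ContDiff ℝ (⊤ : ℕ∞) (fun p : ℝ × ℝ => a p.1 p.2))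
    (hb : ContDiff ℝ (⊤ : ℕ∞) (fun p : ℝ × ℝ => b p.1 p.2))
    (hax : ∀ x w : ℝ, deriv (fun x' => a x' w) x = u x * b x w)
    (hbx : ∀ x w : ℝ, deriv (fun x' => b x' w) x = u x * a x w - 2 * w * b x w)
    (haw : ∀ x w : ℝ, deriv (fun w' => a x w') w
      = 2 * u x ^ 2 * a x w - (4 * w * u x + 2 * deriv u x) * b x w)
    (hbw : ∀ x w : ℝ, deriv (fun w' => b x w') w
      = (-(4 * w * u x) + 2 * deriv u x) * a x w
        + (8 * w ^ 2 - 2 * x - 2 * u x ^ 2) * b x w)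
    (hab : ∀ x w : ℝ, a x w = -b x (-w) * Real.exp (8 * w ^ 3 / 3 - 2 * w * x))
    (hba : ∀ x w : ℝ, b x w = -a x (-w) * Real.exp (8 * w ^ 3 / 3 - 2 * w * x))
    (hy : ∀ x w : ℝ, y x w
      = (2 * u x ^ 2 + x - 4 * w ^ 2) * a x w * a x (-w)
        - (deriv u x + 2 * w * u x) * b x w * a x (-w)
        - (deriv u x - 2 * w * u x) * a x w * b x (-w)) :
    ∀ x w : ℝ, iteratedDeriv 2 (fun x' => y x' w) x
      = u x * b x w * a x (-w) + u x * a x w * b x (-w) := by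
  have Ha : ∀ x w : ℝ, HasDerivAt (fun x' => a x' w) (u x * b x w) x := by
    intro x w
    rw [← hax]
    apply DifferentiableAt.hasDerivAt
    have h1 : Differentiable ℝ (fun p : ℝ × ℝ => a p.1 p.2) := ha.differentiable (by simp)
    have h2 : Differentiable ℝ (fun x' : ℝ => ((x', w) : ℝ × ℝ)) := by fun_prop
    exact (h1.comp h2) x
  have Hb : ∀ x w : ℝ, HasDerivAt (fun x' => b x' w) (u x * a x w - 2 * w * b x w) x := by
    intro x w
    rw [← hbx]
    apply DifferentiableAt.hasDerivAt
    have h1 : Differentiable ℝ (fun p : ℝ × ℝ => b p.1 p.2) := hb.differentiable (by simp)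
    have h2 : Differentiable ℝ (fun x' : ℝ => ((x', w) : ℝ × ℝ)) := by fun_prop
    exact (h1.comp h2) x
  have Hu : ∀ x : ℝ, HasDerivAt u (deriv u x) x := fun x =>
    ((hu.differentiable (by simp)) x).hasDerivAt
  have Hv : ∀ x : ℝ, HasDerivAt (deriv u) (2 * u x ^ 3 + x * u x) x := by
    intro x
    rw [← hP2]
    have h : ContDiff ℝ (1 + 1) u := hu.of_le (by norm_cast)
    have h' := (contDiff_succ_iff_deriv.1 h).2.2
    exact ((h'.differentiable (by simp)) x).hasDerivAt
  have key : ∀ x w : ℝ, a x w * a x (-w) = b x w * b x (-w) := by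
    intro x w
    rw [hab x w, hba x w]
    ring
  intro x w
  have hd : ∀ x : ℝ, HasDerivAt (fun x' => y x' w) (a x w * a x (-w)) x := by
    intro x
    have e : (fun x' => y x' w) = _ := funext fun x' => hy x' w
    rw [e]
    have h1 := ((((((Hu x).pow 2).const_mul 2).add (hasDerivAt_id' x)).sub_const
      (4 * w ^ 2)).mul (Ha x w)).mul (Ha x (-w))
    have h2 := (((Hv x).add ((Hu x).const_mul (2 * w))).mul (Hb x w)).mul (Ha x (-w))
    have h3 := (((Hv x).sub ((Hu x).const_mul (2 * w))).mul (Ha x w)).mul (Hb x (-w))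
    refine ((h1.sub h2).sub h3).congr_deriv ?_
    simp only [Pi.add_apply, Pi.sub_apply, Pi.mul_apply, Pi.pow_apply]
    linear_combination (2 * u x * deriv u x) * key x w
  have e1 : deriv (fun x' => y x' w) = fun x => a x w * a x (-w) :=
    funext fun x => (hd x).deriv
  rw [iteratedDeriv_succ, iteratedDeriv_one, e1]
  refine (((Ha x w).mul (Ha x (-w))).congr_deriv ?_).deriv
  ring
end
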